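/- arXiv:2312.07610 — 2 statements merged into one kernel-verified Lean document; each statement's English description precedes it below -/
import Mathlib

section
/- Identification of stochastic-regime means under model M1 (sequential exchangeability B1.4): for any intervention-kernel collection q̃ (whose kernels depend only on the observed-history values) satisfying positivity B1.2, under consistency and condition B1.4 one has E[Y^{q̃}] = Ψ_{q̃}(P). In particular, the longitudinal stochastic-regime parameter γ_MTP-SI is identified by the g-formula under model M1. -/
open Classical

noncomputable section

/-- Probability of the event `S` under the probability mass function `P`
on a finite sample space. -/
def pr {Ω : Type} [Fintype Ω] (P : Ω → ℝ) (S : Ω → Prop) : ℝ :=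
  ∑ ω, if S ω then P ω else 0

/-- Conditional probability of `S` given `T`, with the convention that it is `0`
when the conditioning event is null (in Lean, `x / 0 = 0`). -/
def cpr {Ω : Type} [Fintype Ω] (P : Ω → ℝ) (S T : Ω → Prop) : ℝ :=
  pr P (fun ω => S ω ∧ T ω) / pr P T

/-- Expectation of `X` under `P`. -/
def expec {Ω : Type} [Fintype Ω] (P : Ω → ℝ) (X : Ω → ℝ) : ℝ :=
  ∑ ω, X ω * P ω

/-- Conditional expectation of `X` given the event `T`, with the convention that
it is `0` when the conditioning event is null. -/
def cexp {Ω : Type} [Fintype Ω] (P : Ω → ℝ) (X : Ω → ℝ) (T : Ω → Prop) : ℝ :=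
  (∑ ω, if T ω then X ω * P ω else 0) / pr P T

/-- Observed history event `{L̄_t = l̄_t, Ā_{t-1} = ā_{t-1}}` (covariates through
time `t`, treatments strictly before `t`). -/
def histEvent {Ω Lt : Type} {K : ℕ} (L : Fin K → Ω → Lt) (A : Fin K → Ω → Fin 2)
    (t : Fin K) (lbar : Fin K → Lt) (abar : Fin K → Fin 2) : Ω → Prop :=
  fun ω => (∀ s, s ≤ t → L s ω = lbar s) ∧ (∀ s, s < t → A s ω = abar s)

/-- The g-formula `Ψ_q̃(P)` for an intervention-kernel collection `q`:
`Σ_{y,l̄_K,ā_K} y · p(y|l̄_K,ā_K) · ∏_j p(l_j|l̄_{j-1},ā_{j-1}) · ∏_t q̃_t(a_t|l̄_t,ā_{t-1})`. -/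
def gform {Ω Lt : Type} [Fintype Ω] [Fintype Lt] {K : ℕ}
    (P : Ω → ℝ) (L : Fin K → Ω → Lt) (A : Fin K → Ω → Fin 2) (Y : Ω → ℝ)
    (q : Fin K → (Fin K → Lt) → (Fin K → Fin 2) → Fin 2 → ℝ) : ℝ :=
  ∑ lbar : Fin K → Lt, ∑ abar : Fin K → Fin 2,
    cexp P Y (fun ω => (∀ s, L s ω = lbar s) ∧ (∀ s, A s ω = abar s))
      * (∏ j, cpr P (fun ω => L j ω = lbar j)
          (fun ω => (∀ s, s < j → L s ω = lbar s) ∧ (∀ s, s < j → A s ω = abar s)))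
      * (∏ t, q t lbar abar (abar t))

/-- `q` is a collection of intervention kernels: each `q t lbar abar` is a
probability mass function on `{0,1}`. -/
def IsKernel {Lt : Type} {K : ℕ}
    (q : Fin K → (Fin K → Lt) → (Fin K → Fin 2) → Fin 2 → ℝ) : Prop :=
  ∀ (t : Fin K) (lbar : Fin K → Lt) (abar : Fin K → Fin 2),
    (∀ a, 0 ≤ q t lbar abar a) ∧ (∑ a, q t lbar abar a) = 1

/-- The kernel at time `t` depends only on the history values `(l̄_t, ā_{t-1})`. -/
def KernelPrefixDep {Lt : Type} {K : ℕ}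
    (q : Fin K → (Fin K → Lt) → (Fin K → Fin 2) → Fin 2 → ℝ) : Prop :=
  ∀ (t : Fin K) (lbar lbar' : Fin K → Lt) (abar abar' : Fin K → Fin 2),
    (∀ s, s ≤ t → lbar s = lbar' s) → (∀ s, s < t → abar s = abar' s) →
    q t lbar abar = q t lbar' abar'

/-- Positivity condition B1.2. -/
def B12 {Ω Lt : Type} [Fintype Ω] {K : ℕ} (P : Ω → ℝ)
    (L : Fin K → Ω → Lt) (A : Fin K → Ω → Fin 2)
    (q : Fin K → (Fin K → Lt) → (Fin K → Fin 2) → Fin 2 → ℝ) : Prop :=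
  ∀ (t : Fin K) (lbar : Fin K → Lt) (abar : Fin K → Fin 2),
    0 < pr P (histEvent L A t lbar abar) →
    ∀ a : Fin 2, 0 < q t lbar abar a →
      0 < cpr P (fun ω => A t ω = a) (histEvent L A t lbar abar)

/-- Counterfactual covariates and natural treatment values at time `t` depend on the
static regime `ā` only through `(ā_1, ..., ā_{t-1})`. -/
def CfPrefixDep {Ω Lt : Type} {K : ℕ}
    (Lc : (Fin K → Fin 2) → Fin K → Ω → Lt)
    (Ac : (Fin K → Fin 2) → Fin K → Ω → Fin 2) : Prop :=
  ∀ (abar abar' : Fin K → Fin 2) (t : Fin K),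
    (∀ s, s < t → abar s = abar' s) → Lc abar t = Lc abar' t ∧ Ac abar t = Ac abar' t

/-- Consistency of the counterfactual process with the observed data. -/
def CfConsistent {Ω Lt : Type} {K : ℕ}
    (L : Fin K → Ω → Lt) (A : Fin K → Ω → Fin 2) (Y : Ω → ℝ)
    (Lc : (Fin K → Fin 2) → Fin K → Ω → Lt)
    (Ac : (Fin K → Fin 2) → Fin K → Ω → Fin 2)
    (Yc : (Fin K → Fin 2) → Ω → ℝ) : Prop :=
  (∀ (abar : Fin K → Fin 2) (t : Fin K) (ω : Ω),
    (∀ s, s < t → A s ω = abar s) → Lc abar t ω = L t ω ∧ Ac abar t ω = A t ω) ∧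
  (∀ (abar : Fin K → Fin 2) (ω : Ω), (∀ s, A s ω = abar s) → Yc abar ω = Y ω)

/-- Counterfactual history event `{L̄_m(ā) = l̄_m, Ā_{m-1}(ā) = ā_{m-1}}`. -/
def cfHist {Ω Lt : Type} {K : ℕ}
    (Lc : (Fin K → Fin 2) → Fin K → Ω → Lt)
    (Ac : (Fin K → Fin 2) → Fin K → Ω → Fin 2)
    (abar : Fin K → Fin 2) (m : Fin K) (lbar : Fin K → Lt) : Ω → Prop :=
  fun ω => (∀ s, s ≤ m → Lc abar s ω = lbar s) ∧ (∀ s, s < m → Ac abar s ω = abar s)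

/-- Sequential exchangeability condition B1.4: for every `m` and `ā`, the vector
`(L_{m+1}(ā), ..., L_K(ā), Y(ā))` is conditionally independent of the indicator
`1{A_m(ā) = ā_m}` given each positive-probability counterfactual history. -/
def B14 {Ω Lt : Type} [Fintype Ω] {K : ℕ} (P : Ω → ℝ)
    (Lc : (Fin K → Fin 2) → Fin K → Ω → Lt)
    (Ac : (Fin K → Fin 2) → Fin K → Ω → Fin 2)
    (Yc : (Fin K → Fin 2) → Ω → ℝ) : Prop :=
  ∀ (m : Fin K) (abar : Fin K → Fin 2) (lbar : Fin K → Lt),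
    0 < pr P (cfHist Lc Ac abar m lbar) →
    ∀ (lv : Fin K → Lt) (y : ℝ),
      cpr P (fun ω => ((∀ s, m < s → Lc abar s ω = lv s) ∧ Yc abar ω = y)
            ∧ Ac abar m ω = abar m)
          (cfHist Lc Ac abar m lbar)
        = cpr P (fun ω => (∀ s, m < s → Lc abar s ω = lv s) ∧ Yc abar ω = y)
              (cfHist Lc Ac abar m lbar)
          * cpr P (fun ω => Ac abar m ω = abar m) (cfHist Lc Ac abar m lbar)

/-- Sequential exchangeability condition B1.3: as B1.4, but with the future vector
enlarged to `(L_{m+1}(ā), ..., L_K(ā), A_{m+1}(ā), ..., A_K(ā), Y(ā))`. -/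
def B13 {Ω Lt : Type} [Fintype Ω] {K : ℕ} (P : Ω → ℝ)
    (Lc : (Fin K → Fin 2) → Fin K → Ω → Lt)
    (Ac : (Fin K → Fin 2) → Fin K → Ω → Fin 2)
    (Yc : (Fin K → Fin 2) → Ω → ℝ) : Prop :=
  ∀ (m : Fin K) (abar : Fin K → Fin 2) (lbar : Fin K → Lt),
    0 < pr P (cfHist Lc Ac abar m lbar) →
    ∀ (lv : Fin K → Lt) (av : Fin K → Fin 2) (y : ℝ),
      cpr P (fun ω => ((∀ s, m < s → Lc abar s ω = lv s)
              ∧ (∀ s, m < s → Ac abar s ω = av s) ∧ Yc abar ω = y)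
            ∧ Ac abar m ω = abar m)
          (cfHist Lc Ac abar m lbar)
        = cpr P (fun ω => (∀ s, m < s → Lc abar s ω = lv s)
              ∧ (∀ s, m < s → Ac abar s ω = av s) ∧ Yc abar ω = y)
              (cfHist Lc Ac abar m lbar)
          * cpr P (fun ω => Ac abar m ω = abar m) (cfHist Lc Ac abar m lbar)

/-- Mean outcome under the stochastic regime with intervention kernels `q`:
`E[Y^q̃] = Σ_{ā} E[ Y(ā) · ∏_t q̃_t(ā_t | L̄_t(ā), ā_{t-1}) ]`. -/
def stochMean {Ω Lt : Type} [Fintype Ω] {K : ℕ} (P : Ω → ℝ)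
    (Lc : (Fin K → Fin 2) → Fin K → Ω → Lt)
    (Yc : (Fin K → Fin 2) → Ω → ℝ)
    (q : Fin K → (Fin K → Lt) → (Fin K → Fin 2) → Fin 2 → ℝ) : ℝ :=
  ∑ abar : Fin K → Fin 2,
    expec P (fun ω => Yc abar ω * ∏ t, q t (fun s => Lc abar s ω) abar (abar t))

/-- The decision functions of a modified treatment policy depend only on
`(a, l̄_t, ā_{t-1})`. -/
def PolPrefixDep {Lt : Type} {K : ℕ}
    (g : Fin K → Fin 2 → (Fin K → Lt) → (Fin K → Fin 2) → Fin 2) : Prop :=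
  ∀ (t : Fin K) (a : Fin 2) (lbar lbar' : Fin K → Lt) (abar abar' : Fin K → Fin 2),
    (∀ s, s ≤ t → lbar s = lbar' s) → (∀ s, s < t → abar s = abar' s) →
    g t a lbar abar = g t a lbar' abar'

/-- `Ap` is the recursively defined assigned-treatment process `Ā⁺` of the MTP `g`:
`A⁺_t = g_t(A_t(Ā⁺_{t-1}), L̄_t(Ā⁺_{t-1}), Ā⁺_{t-1})`. -/
def IsMTPProcess {Ω Lt : Type} {K : ℕ}
    (Lc : (Fin K → Fin 2) → Fin K → Ω → Lt)
    (Ac : (Fin K → Fin 2) → Fin K → Ω → Fin 2)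
    (g : Fin K → Fin 2 → (Fin K → Lt) → (Fin K → Fin 2) → Fin 2)
    (Ap : Fin K → Ω → Fin 2) : Prop :=
  ∀ (t : Fin K) (ω : Ω),
    Ap t ω = g t (Ac (fun s => Ap s ω) t ω)
        (fun s => Lc (fun s' => Ap s' ω) s ω) (fun s => Ap s ω)

/-- Induced intervention kernels `q̃^g` of an MTP:
`q̃^g_t(a⁺ | l̄_t, ā_{t-1}) = Σ_{a : g_t(a,l̄_t,ā_{t-1}) = a⁺} P(A_t = a | L̄_t = l̄_t, Ā_{t-1} = ā_{t-1})`. -/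
def qMTP {Ω Lt : Type} [Fintype Ω] {K : ℕ} (P : Ω → ℝ)
    (L : Fin K → Ω → Lt) (A : Fin K → Ω → Fin 2)
    (g : Fin K → Fin 2 → (Fin K → Lt) → (Fin K → Fin 2) → Fin 2) :
    Fin K → (Fin K → Lt) → (Fin K → Fin 2) → Fin 2 → ℝ :=
  fun t lbar abar aplus =>
    ∑ a : Fin 2, if g t a lbar abar = aplus then
      cpr P (fun ω => A t ω = a) (histEvent L A t lbar abar) else 0

/-- Counterfactual (g1-stochastic) kernels `q^{g,cf}` of an MTP:
`q^{g,cf}_t(a⁺ | l̄_t, ā⁺_{t-1}) = P( g_t(A_t(Ā⁺_{t-1}), l̄_t, ā⁺_{t-1}) = a⁺ |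
  L̄_t(Ā⁺_{t-1}) = l̄_t, Ā⁺_{t-1} = ā⁺_{t-1} )`. -/
def qMTPcf {Ω Lt : Type} [Fintype Ω] {K : ℕ} (P : Ω → ℝ)
    (Lc : (Fin K → Fin 2) → Fin K → Ω → Lt)
    (Ac : (Fin K → Fin 2) → Fin K → Ω → Fin 2)
    (g : Fin K → Fin 2 → (Fin K → Lt) → (Fin K → Fin 2) → Fin 2)
    (Ap : Fin K → Ω → Fin 2) :
    Fin K → (Fin K → Lt) → (Fin K → Fin 2) → Fin 2 → ℝ :=
  fun t lbar abar aplus =>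
    cpr P (fun ω => g t (Ac (fun s => Ap s ω) t ω) lbar abar = aplus)
      (fun ω => (∀ s, s ≤ t → Lc (fun s' => Ap s' ω) s ω = lbar s) ∧
        (∀ s, s < t → Ap s ω = abar s))

/-!
Fix a static regime `ā` and a covariate path `l̄`. Write `R_n` for the expectation of `Y(ā)`
restricted to the event that the counterfactual covariates follow `l̄` and the first `n` observed
treatments follow `ā`, and `h_n` for the probability that the first `n` observed covariates and
treatments follow `(l̄, ā)`. Exchangeability at time `m` says that, within the history at time `m`,
restricting further to `A_m = ā_m` multiplies `R_m` by `p(ā_m | l̄_m, ā_{m-1})`, hence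
`R_m / h_m = R_{m+1} / h_{m+1} · p(l_m | l̄_{m-1}, ā_{m-1})`. This recursion telescopes from
`R_0 / h_0 = E[Y(ā); L̄(ā) = l̄]` to the `(l̄, ā)`-term of the g-formula, because consistency turns
`R_K / h_K` into `E[Y | l̄, ā]`. Positivity keeps the divisions
meaningful along every `(l̄, ā)` to which the kernels give positive weight.
-/

section FiniteProbability

variable {Ω : Type} [Fintype Ω] {P : Ω → ℝ} {X X' : Ω → ℝ} {S T B H : Ω → Prop}

/-- The unnormalised expectation `E[X; T]` of `X` on the event `T`, the numerator of `cexp`. -/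
def restrictedExpec (P : Ω → ℝ) (X : Ω → ℝ) (T : Ω → Prop) : ℝ :=
  ∑ ω, if T ω then X ω * P ω else 0

lemma pr_congr (h : ∀ ω, S ω ↔ T ω) : pr P S = pr P T :=
  congrArg (pr P) (funext fun ω => propext (h ω))

lemma pr_nonneg (hP : ∀ ω, 0 ≤ P ω) (S : Ω → Prop) : 0 ≤ pr P S :=
  Finset.sum_nonneg fun ω _ => ite_nonneg (hP ω) le_rfl

lemma restrictedExpec_congr (h : ∀ ω, S ω ↔ T ω) (hX : ∀ ω, T ω → X ω = X' ω) :
    restrictedExpec P X S = restrictedExpec P X' T :=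
  Finset.sum_congr rfl fun ω _ => by
    simp only [h ω]
    exact ite_congr rfl (fun hT => by rw [hX ω hT]) fun _ => rfl

lemma restrictedExpec_eq_zero (hP : ∀ ω, 0 ≤ P ω) (hTH : ∀ ω, T ω → H ω) (hH : pr P H = 0) :
    restrictedExpec P X T = 0 := by
  have hP_zero : ∀ ω, H ω → P ω = 0 := fun ω hω => by
    have := (Finset.sum_eq_zero_iff_of_nonneg fun ω _ => ite_nonneg (hP ω) le_rfl).1 hH ω
      (Finset.mem_univ ω)
    rwa [if_pos hω] at this
  exact Finset.sum_eq_zero fun ω _ => ite_eq_right_iff.2 fun hT => by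
    rw [hP_zero ω (hTH ω hT), mul_zero]

lemma restrictedExpec_eq_sum_mul_pr (P X : Ω → ℝ) (T : Ω → Prop) :
    restrictedExpec P X T = ∑ y ∈ Finset.univ.image X, y * pr P (fun ω => X ω = y ∧ T ω) := by
  simp only [restrictedExpec, pr, Finset.mul_sum]
  rw [Finset.sum_comm]
  refine Finset.sum_congr rfl fun ω _ => ?_
  simp [ite_and, Finset.sum_ite_eq]

lemma expec_mul_comp {ζ : Type*} [Fintype ζ] (P X : Ω → ℝ) (Z : Ω → ζ) (w : ζ → ℝ) :
    expec P (fun ω => X ω * w (Z ω)) =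
      ∑ z, restrictedExpec P X (fun ω => Z ω = z) * w z := by
  simp only [expec, restrictedExpec, Finset.sum_mul, ite_mul, zero_mul]
  rw [Finset.sum_comm]
  simp [mul_right_comm]

lemma restrictedExpec_mul_pr_of_cpr_and_eq_mul (hH : pr P H ≠ 0)
    (hindep : ∀ y, cpr P (fun ω => (S ω ∧ X ω = y) ∧ B ω) H =
      cpr P (fun ω => S ω ∧ X ω = y) H * cpr P B H) :
    restrictedExpec P X (fun ω => B ω ∧ S ω ∧ H ω) * pr P H =
      restrictedExpec P X (fun ω => S ω ∧ H ω) * pr P (fun ω => B ω ∧ H ω) := by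
  simp only [restrictedExpec_eq_sum_mul_pr, Finset.sum_mul]
  refine Finset.sum_congr rfl fun y _ => ?_
  have hy := hindep y
  simp only [cpr] at hy
  field_simp at hy
  rw [pr_congr (T := fun ω => ((S ω ∧ X ω = y) ∧ B ω) ∧ H ω) fun ω => by tauto,
    pr_congr (S := fun ω => X ω = y ∧ S ω ∧ H ω) (T := fun ω => (S ω ∧ X ω = y) ∧ H ω)
      fun ω => by tauto]
  linear_combination y * hy

end FiniteProbability

lemma eq_mul_prod_of_forall_eq_mul {M : Type*} [CommMonoid M] {K : ℕ} {f : ℕ → M} {g : Fin K → M}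
    (h : ∀ j : Fin K, f j = f (j + 1) * g j) : f 0 = f K * ∏ j, g j := by
  induction K with
  | zero => simp
  | succ K ih =>
    have hlast : f K = f (K + 1) * g (Fin.last K) := h (Fin.last K)
    rw [Fin.prod_univ_castSucc, ih fun j => h j.castSucc, hlast, mul_assoc, mul_comm (g _)]

lemma forall_le_iff_self_and_forall_lt {α : Type*} [PartialOrder α] {m : α} {p : α → Prop} :
    (∀ s, s ≤ m → p s) ↔ p m ∧ ∀ s, s < m → p s := by
  simp only [le_iff_eq_or_lt, or_imp, forall_and, forall_eq]

section Identification

variable {Ω Lt : Type} {K : ℕ} {P : Ω → ℝ} {L : Fin K → Ω → Lt} {A : Fin K → Ω → Fin 2}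
  {Y : Ω → ℝ} {Lc : (Fin K → Fin 2) → Fin K → Ω → Lt}
  {Ac : (Fin K → Fin 2) → Fin K → Ω → Fin 2} {Yc : (Fin K → Fin 2) → Ω → ℝ}
  {l : Fin K → Lt} {a : Fin K → Fin 2} {m : Fin K} {ω : Ω}

/-- The event that the first `n` observed covariates and treatments are those of `(l̄, ā)`.
The index is a natural number, so that `n = K` is the complete observed history. -/
def pastEvent (L : Fin K → Ω → Lt) (A : Fin K → Ω → Fin 2) (l : Fin K → Lt) (a : Fin K → Fin 2)
    (n : ℕ) : Ω → Prop :=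
  fun ω => (∀ s : Fin K, s < n → L s ω = l s) ∧ ∀ s : Fin K, s < n → A s ω = a s

/-- The event that the whole counterfactual covariate path under `ā` is `l̄` and the first `n`
observed treatments are those of `ā`; it interpolates between `{L̄(ā) = l̄}` at `n = 0` and the
complete observed history at `n = K`. -/
def pathEvent (Lc : (Fin K → Fin 2) → Fin K → Ω → Lt) (A : Fin K → Ω → Fin 2) (l : Fin K → Lt)
    (a : Fin K → Fin 2) (n : ℕ) : Ω → Prop :=
  fun ω => (∀ s, Lc a s ω = l s) ∧ ∀ s : Fin K, s < n → A s ω = a s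

lemma pastEvent_succ_iff :
    pastEvent L A l a (m + 1) ω ↔ A m ω = a m ∧ histEvent L A m l a ω := by
  simp only [pastEvent, histEvent, Nat.lt_succ_iff, Fin.val_fin_le]
  rw [forall_le_iff_self_and_forall_lt (p := fun s => A s ω = a s), and_left_comm]

lemma histEvent_iff_pastEvent :
    histEvent L A m l a ω ↔ L m ω = l m ∧ pastEvent L A l a m ω := by
  simp only [pastEvent, histEvent, Fin.val_fin_lt]
  rw [forall_le_iff_self_and_forall_lt (p := fun s => L s ω = l s), and_assoc]

lemma pathEvent_succ_iff :
    pathEvent Lc A l a (m + 1) ω ↔ A m ω = a m ∧ pathEvent Lc A l a m ω := by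
  simp only [pathEvent, Nat.lt_succ_iff, Fin.val_fin_le, Fin.val_fin_lt]
  rw [forall_le_iff_self_and_forall_lt (p := fun s => A s ω = a s), and_left_comm]

namespace CfConsistent

lemma forall_lt_natural_eq_iff (hcons : CfConsistent L A Y Lc Ac Yc) :
    (∀ s, s < m → Ac a s ω = a s) ↔ ∀ s, s < m → A s ω = a s := by
  constructor <;> intro h s
  · induction s using WellFoundedLT.induction with
    | ind s ih =>
      intro hs
      rw [← (hcons.1 a s ω fun r hr => ih r hr (hr.trans hs)).2, h s hs]
  · intro hs
    rw [(hcons.1 a s ω fun r hr => h r (hr.trans hs)).2, h s hs]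

lemma forall_le_covariate_eq_iff (hcons : CfConsistent L A Y Lc Ac Yc)
    (hA : ∀ s, s < m → A s ω = a s) :
    (∀ s, s ≤ m → Lc a s ω = l s) ↔ ∀ s, s ≤ m → L s ω = l s :=
  forall₂_congr fun s hs => by rw [(hcons.1 a s ω fun r hr => hA r (hr.trans_le hs)).1]

lemma cfHist_eq_histEvent (hcons : CfConsistent L A Y Lc Ac Yc) :
    cfHist Lc Ac a m l = histEvent L A m l a := by
  funext ω
  simp only [cfHist, histEvent, hcons.forall_lt_natural_eq_iff]
  exact propext (and_congr_left hcons.forall_le_covariate_eq_iff)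

lemma natural_eq_iff_of_histEvent (hcons : CfConsistent L A Y Lc Ac Yc)
    (hω : histEvent L A m l a ω) : Ac a m ω = a m ↔ A m ω = a m := by
  rw [(hcons.1 a m ω hω.2).2]

lemma pathEvent_iff_histEvent (hcons : CfConsistent L A Y Lc Ac Yc) :
    pathEvent Lc A l a m ω ↔ (∀ s, m < s → Lc a s ω = l s) ∧ histEvent L A m l a ω := by
  have hsplit : (∀ s, Lc a s ω = l s) ↔
      (∀ s, m < s → Lc a s ω = l s) ∧ ∀ s, s ≤ m → Lc a s ω = l s := by
    simp only [← forall_and, ← or_imp, lt_or_ge, forall_const]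
  simp only [pathEvent, histEvent, hsplit, and_assoc]
  exact and_congr_right fun _ => and_congr_left hcons.forall_le_covariate_eq_iff

lemma pathEvent_card_iff (hcons : CfConsistent L A Y Lc Ac Yc) :
    pathEvent Lc A l a K ω ↔ (∀ s, L s ω = l s) ∧ ∀ s, A s ω = a s := by
  simp only [pathEvent, Fin.is_lt, forall_const]
  exact and_congr_left fun hA => forall_congr' fun s => by rw [(hcons.1 a s ω fun r _ => hA r).1]

end CfConsistent

variable [Fintype Ω]

lemma restrictedExpec_pathEvent_succ_mul_pr (hcons : CfConsistent L A Y Lc Ac Yc)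
    (hB14 : B14 P Lc Ac Yc) (hhist : 0 < pr P (histEvent L A m l a)) :
    restrictedExpec P (Yc a) (pathEvent Lc A l a (m + 1)) * pr P (histEvent L A m l a) =
      restrictedExpec P (Yc a) (pathEvent Lc A l a m) * pr P (pastEvent L A l a (m + 1)) := by
  have hindep := hB14 m a l (by rwa [hcons.cfHist_eq_histEvent]) l
  rw [hcons.cfHist_eq_histEvent] at hindep
  have hexchange := restrictedExpec_mul_pr_of_cpr_and_eq_mul hhist.ne' hindep
  convert hexchange using 2
  · refine restrictedExpec_congr (fun ω => ?_) fun _ _ => rfl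
    rw [pathEvent_succ_iff, hcons.pathEvent_iff_histEvent]
    exact and_congr_left fun hω => (hcons.natural_eq_iff_of_histEvent hω.2).symm
  · exact restrictedExpec_congr (fun _ => hcons.pathEvent_iff_histEvent) fun _ _ => rfl
  · refine pr_congr fun ω => ?_
    rw [pastEvent_succ_iff]
    exact and_congr_left fun hω => (hcons.natural_eq_iff_of_histEvent hω).symm

lemma restrictedExpec_pathEvent_div_pr_eq_succ (hP : ∀ ω, 0 ≤ P ω)
    (hcons : CfConsistent L A Y Lc Ac Yc) (hB14 : B14 P Lc Ac Yc)
    (hpos : 0 < pr P (histEvent L A m l a) →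
      0 < cpr P (fun ω => A m ω = a m) (histEvent L A m l a)) :
    restrictedExpec P (Yc a) (pathEvent Lc A l a m) / pr P (pastEvent L A l a m) =
      restrictedExpec P (Yc a) (pathEvent Lc A l a (m + 1)) / pr P (pastEvent L A l a (m + 1)) *
        cpr P (fun ω => L m ω = l m) (pastEvent L A l a m) := by
  have hcov : cpr P (fun ω => L m ω = l m) (pastEvent L A l a m) =
      pr P (histEvent L A m l a) / pr P (pastEvent L A l a m) :=
    congrArg (· / _) (pr_congr fun _ => histEvent_iff_pastEvent.symm)
  have htreat : cpr P (fun ω => A m ω = a m) (histEvent L A m l a) =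
      pr P (pastEvent L A l a (m + 1)) / pr P (histEvent L A m l a) :=
    congrArg (· / _) (pr_congr fun _ => pastEvent_succ_iff.symm)
  rw [hcov]
  rcases (pr_nonneg hP (histEvent L A m l a)).eq_or_lt' with hnull | hhist
  · rw [restrictedExpec_eq_zero hP (fun ω hω => (hcons.pathEvent_iff_histEvent.1 hω).2) hnull,
      hnull, zero_div, mul_zero]
  · have hsucc : pr P (pastEvent L A l a (m + 1)) ≠ 0 := fun h0 => by
      simpa [htreat, h0] using hpos hhist
    rw [div_mul_div_comm, restrictedExpec_pathEvent_succ_mul_pr hcons hB14 hhist,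
      mul_comm (pr P (pastEvent L A l a (m + 1))), mul_div_mul_right _ _ hsucc]

lemma restrictedExpec_covariate_eq_cexp_mul_prod_cpr (hP : ∀ ω, 0 ≤ P ω) (hP1 : ∑ ω, P ω = 1)
    (hcons : CfConsistent L A Y Lc Ac Yc) (hB14 : B14 P Lc Ac Yc)
    (hpos : ∀ t, 0 < pr P (histEvent L A t l a) →
      0 < cpr P (fun ω => A t ω = a t) (histEvent L A t l a)) :
    restrictedExpec P (Yc a) (fun ω => (Lc a · ω) = l) =
      cexp P Y (fun ω => (∀ s, L s ω = l s) ∧ ∀ s, A s ω = a s) *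
        ∏ j : Fin K, cpr P (fun ω => L j ω = l j) (pastEvent L A l a j) := by
  let f : ℕ → ℝ := fun n =>
    restrictedExpec P (Yc a) (pathEvent Lc A l a n) / pr P (pastEvent L A l a n)
  have hstart : f 0 = restrictedExpec P (Yc a) (fun ω => (Lc a · ω) = l) := by
    have htotal : pr P (pastEvent L A l a 0) = 1 := by simp [pr, pastEvent, hP1]
    simp only [f, htotal, div_one]
    exact restrictedExpec_congr (fun ω => by simp [pathEvent, funext_iff]) fun _ _ => rfl
  have hend : f K = cexp P Y (fun ω => (∀ s, L s ω = l s) ∧ ∀ s, A s ω = a s) :=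
    congrArg₂ (· / ·)
      (restrictedExpec_congr (fun _ => hcons.pathEvent_card_iff) fun ω hω => hcons.2 a ω hω.2)
      (pr_congr fun ω => by simp only [pastEvent, Fin.is_lt, forall_const])
  rw [← hstart, ← hend]
  exact eq_mul_prod_of_forall_eq_mul fun j =>
    restrictedExpec_pathEvent_div_pr_eq_succ hP hcons hB14 (hpos j)

theorem stochastic_regime_identification_M1_general [Fintype Lt]
    (hP : ∀ ω, 0 ≤ P ω) (hP1 : ∑ ω, P ω = 1) (hcons : CfConsistent L A Y Lc Ac Yc)
    {q : Fin K → (Fin K → Lt) → (Fin K → Fin 2) → Fin 2 → ℝ} (hq : ∀ t l a b, 0 ≤ q t l a b)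
    (hB12 : B12 P L A q) (hB14 : B14 P Lc Ac Yc) :
    stochMean P Lc Yc q = gform P L A Y q := by
  rw [gform, stochMean, Finset.sum_comm]
  refine Finset.sum_congr rfl fun a _ => ?_
  rw [expec_mul_comp P (Yc a) (fun ω => (Lc a · ω)) fun l => ∏ t, q t l a (a t)]
  refine Finset.sum_congr rfl fun l _ => ?_
  by_cases hweight : ∏ t, q t l a (a t) = 0
  · rw [hweight, mul_zero, mul_zero]
  · have hq_pos : ∀ t, 0 < q t l a (a t) := fun t =>
      (hq t l a (a t)).lt_of_ne' (Finset.prod_ne_zero_iff.1 hweight t (Finset.mem_univ t))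
    rw [restrictedExpec_covariate_eq_cexp_mul_prod_cpr hP hP1 hcons hB14
      fun t ht => hB12 t l a ht (a t) (hq_pos t)]
    rfl

end Identification

/-- Identification of stochastic-regime means under model `M1`
(sequential exchangeability B1.4): for any intervention-kernel collection `q̃`
(depending only on observed-history values) satisfying positivity B1.2, under
consistency and B1.4 one has `E[Y^q̃] = Ψ_q̃(P)`; in particular the longitudinal
stochastic-regime parameter `γ_MTP-SI` is identified by the g-formula under `M1`. -/
theorem stochastic_regime_identification_M1
    (K : ℕ) (hK : 1 ≤ K) (Ω Lt : Type) [Fintype Ω] [Fintype Lt]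
    (P : Ω → ℝ) (hP0 : ∀ ω, 0 ≤ P ω) (hP1 : (∑ ω, P ω) = 1)
    (L : Fin K → Ω → Lt) (A : Fin K → Ω → Fin 2) (Y : Ω → ℝ)
    (Lc : (Fin K → Fin 2) → Fin K → Ω → Lt)
    (Ac : (Fin K → Fin 2) → Fin K → Ω → Fin 2)
    (Yc : (Fin K → Fin 2) → Ω → ℝ)
    (hcfpre : CfPrefixDep Lc Ac)
    (hcons : CfConsistent L A Y Lc Ac Yc)
    (q : Fin K → (Fin K → Lt) → (Fin K → Fin 2) → Fin 2 → ℝ)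
    (hker : IsKernel q) (hkpre : KernelPrefixDep q)
    (hB12 : B12 P L A q)
    (hB14 : B14 P Lc Ac Yc) :
    stochMean P Lc Yc q = gform P L A Y q := by
  exact stochastic_regime_identification_M1_general hP0 hP1 hcons
    (fun t l a => (hker t l a).1) hB12 hB14
end
end

section
/- Condition B1.3 is strictly stronger than condition B1.4: for any longitudinal counterfactual model as in the context, B1.3 implies B1.4; moreover, there exist K ≥ 2 and a finite collection of observed and counterfactual variables satisfying the consistency conditions for which B1.4 holds for every m and every ā but B1.3 fails for some m and some ā. -/
open Classical

noncomputable section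

/-!
B1.4 is a marginal of B1.3: summing the factorization of B1.3 over all values of the future natural
treatments removes them from the vector. As to strictness, B1.4 holds trivially when the covariates
and the outcome are deterministic, whereas B1.3 still demands that `A_m(ā)` be independent of the
later natural treatments. Letting a single fair coin toss decide all natural treatment values
violates this.
-/

section ConditionalProbability

variable {Ω : Type} [Fintype Ω] {β : Type*} (P : Ω → ℝ)

lemma pr_eq_sum_fiber (X : Ω → β) (S : Ω → Prop) :
    pr P S = ∑ x ∈ Finset.univ.image X, pr P (fun ω => X ω = x ∧ S ω) := by
  unfold pr
  rw [Finset.sum_comm]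
  refine Finset.sum_congr rfl fun ω _ => ?_
  by_cases hω : S ω <;> simp [hω]

lemma cpr_eq_sum_fiber (X : Ω → β) (S T : Ω → Prop) :
    cpr P S T = ∑ x ∈ Finset.univ.image X, cpr P (fun ω => X ω = x ∧ S ω) T := by
  simp only [cpr, and_assoc]
  rw [← Finset.sum_div, ← pr_eq_sum_fiber]

variable {P}

lemma cpr_and_eq_mul_of_forall_fiber (X : Ω → β) {S D T : Ω → Prop}
    (h : ∀ x, cpr P (fun ω => (X ω = x ∧ S ω) ∧ D ω) T
      = cpr P (fun ω => X ω = x ∧ S ω) T * cpr P D T) :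
    cpr P (fun ω => S ω ∧ D ω) T = cpr P S T * cpr P D T := by
  calc cpr P (fun ω => S ω ∧ D ω) T
      = ∑ x ∈ Finset.univ.image X, cpr P (fun ω => (X ω = x ∧ S ω) ∧ D ω) T := by
        simp only [and_assoc, ← cpr_eq_sum_fiber]
    _ = (∑ x ∈ Finset.univ.image X, cpr P (fun ω => X ω = x ∧ S ω) T) * cpr P D T := by
        rw [Finset.sum_mul, Finset.sum_congr rfl fun x _ => h x]
    _ = cpr P S T * cpr P D T := by rw [← cpr_eq_sum_fiber]

lemma cpr_const_and (p : Prop) {D T : Ω → Prop} (hT : pr P T ≠ 0) :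
    cpr P (fun ω => p ∧ D ω) T = cpr P (fun _ => p) T * cpr P D T := by
  by_cases hp : p
  · simp [cpr, hp, div_self hT]
  · simp [cpr, pr, hp]

end ConditionalProbability

section SequentialExchangeability

variable {Ω Lt : Type} [Fintype Ω] {K : ℕ} {P : Ω → ℝ}

theorem B14_of_B13 {Lc : (Fin K → Fin 2) → Fin K → Ω → Lt}
    {Ac : (Fin K → Fin 2) → Fin K → Ω → Fin 2} {Yc : (Fin K → Fin 2) → Ω → ℝ}
    (h : B13 P Lc Ac Yc) : B14 P Lc Ac Yc := by
  intro m abar lbar hpos lv y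
  let futureTreatments (ω : Ω) (s : Set.Ioi m) : Fin 2 := Ac abar s ω
  refine cpr_and_eq_mul_of_forall_fiber futureTreatments fun av => ?_
  have futureTreatments_eq_iff (ω : Ω) : futureTreatments ω = av ↔
      ∀ s, m < s → Ac abar s ω = Function.extend Subtype.val av 0 s := by
    rw [funext_iff, Subtype.forall]
    refine forall₂_congr fun s hs => ?_
    rw [← Subtype.val_injective.extend_apply av 0 ⟨s, hs⟩]
  simp only [futureTreatments_eq_iff, and_left_comm (b := ∀ s, m < s → Lc abar s _ = lv s)]
  exact h m abar lbar hpos lv _ y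

theorem B14_of_deterministic (l : (Fin K → Fin 2) → Fin K → Lt)
    (Ac : (Fin K → Fin 2) → Fin K → Ω → Fin 2) (y : (Fin K → Fin 2) → ℝ) :
    B14 P (fun abar s _ => l abar s) Ac (fun abar _ => y abar) :=
  fun _ _ _ hpos _ _ => cpr_const_and _ hpos.ne'

theorem not_B13_of_common_coin (hK : 2 ≤ K) (l : (Fin K → Fin 2) → Fin K → Lt)
    (y : (Fin K → Fin 2) → ℝ) :
    ¬ B13 (fun _ : Fin 2 => (1 / 2 : ℝ)) (fun abar s _ => l abar s) (fun _ _ ω => ω)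
      (fun abar _ => y abar) := by
  intro h
  let first : Fin K := ⟨0, by lia⟩
  let second : Fin K := ⟨1, by lia⟩
  have not_lt_first (s : Fin K) : ¬ s < first := Nat.not_lt_zero s
  have future_eq_zero_iff (ω : Fin 2) : (∀ s, first < s → ω = 0) ↔ ω = 0 :=
    ⟨fun hω => hω second Nat.zero_lt_one, fun hω _ _ => hω⟩
  have history_eq : cfHist (fun abar s (_ : Fin 2) => l abar s) (fun _ _ ω => ω) 0 first (l 0)
      = fun _ => True := by
    funext ω
    simp [cfHist, not_lt_first]
  have factorization := h first 0 (l 0) (by simp [history_eq, pr]) (l 0) 0 (y 0)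
  simp only [history_eq, Pi.zero_apply, future_eq_zero_iff, implies_true, true_and, and_true,
    and_self] at factorization
  have cpr_zero : cpr (fun _ : Fin 2 => (1 / 2 : ℝ)) (fun ω => ω = 0) (fun _ => True) = 1 / 2 := by
    simp [cpr, pr]
  rw [cpr_zero] at factorization
  norm_num at factorization

end SequentialExchangeability

theorem B13_strictly_stronger_than_B14_general {Ω Lt : Type} [Fintype Ω] {K : ℕ} (P : Ω → ℝ)
    (Lc : (Fin K → Fin 2) → Fin K → Ω → Lt) (Ac : (Fin K → Fin 2) → Fin K → Ω → Fin 2)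
    (Yc : (Fin K → Fin 2) → Ω → ℝ) :
    (B13 P Lc Ac Yc → B14 P Lc Ac Yc)
    ∧ ∀ K' : ℕ, 2 ≤ K' →
        ∃ (P' : Fin 2 → ℝ) (L' : Fin K' → Fin 2 → Fin 1)
          (A' : Fin K' → Fin 2 → Fin 2) (Y' : Fin 2 → ℝ)
          (Lc' : (Fin K' → Fin 2) → Fin K' → Fin 2 → Fin 1)
          (Ac' : (Fin K' → Fin 2) → Fin K' → Fin 2 → Fin 2)
          (Yc' : (Fin K' → Fin 2) → Fin 2 → ℝ),
          (∀ ω, 0 ≤ P' ω) ∧ (∑ ω, P' ω) = 1 ∧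
          CfPrefixDep Lc' Ac' ∧ CfConsistent L' A' Y' Lc' Ac' Yc' ∧
          B14 P' Lc' Ac' Yc' ∧ ¬ B13 P' Lc' Ac' Yc' := by
  refine ⟨B14_of_B13, fun K' hK' => ⟨fun _ => 1 / 2, fun _ _ => 0, fun _ ω => ω, fun _ => 0,
    fun _ _ _ => 0, fun _ _ ω => ω, fun _ _ => 0, ?nonneg, ?sum_one, ?prefixDep, ?consistent,
    B14_of_deterministic _ _ _, not_B13_of_common_coin hK' _ _⟩⟩
  case nonneg => intro; positivity
  case sum_one => norm_num
  case prefixDep => exact fun _ _ _ _ => ⟨rfl, rfl⟩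
  case consistent => exact ⟨fun _ _ _ _ => ⟨rfl, rfl⟩, fun _ _ _ => rfl⟩

/-- Condition B1.3 is strictly stronger than condition B1.4:
for any longitudinal counterfactual model, B1.3 implies B1.4; moreover, there exist
`K ≥ 2` and a finite collection of observed and counterfactual variables satisfying
the consistency conditions for which B1.4 holds but B1.3 fails. -/
theorem B13_strictly_stronger_than_B14
    (K : ℕ) (hK : 1 ≤ K) (Ω Lt : Type) [Fintype Ω] [Fintype Lt]
    (P : Ω → ℝ) (hP0 : ∀ ω, 0 ≤ P ω) (hP1 : (∑ ω, P ω) = 1)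
    (L : Fin K → Ω → Lt) (A : Fin K → Ω → Fin 2) (Y : Ω → ℝ)
    (Lc : (Fin K → Fin 2) → Fin K → Ω → Lt)
    (Ac : (Fin K → Fin 2) → Fin K → Ω → Fin 2)
    (Yc : (Fin K → Fin 2) → Ω → ℝ)
    (hcfpre : CfPrefixDep Lc Ac)
    (hcons : CfConsistent L A Y Lc Ac Yc) :
    (B13 P Lc Ac Yc → B14 P Lc Ac Yc)
    ∧ (∃ (K' nL n : ℕ), 2 ≤ K' ∧
        ∃ (P' : Fin n → ℝ) (L' : Fin K' → Fin n → Fin nL)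
          (A' : Fin K' → Fin n → Fin 2) (Y' : Fin n → ℝ)
          (Lc' : (Fin K' → Fin 2) → Fin K' → Fin n → Fin nL)
          (Ac' : (Fin K' → Fin 2) → Fin K' → Fin n → Fin 2)
          (Yc' : (Fin K' → Fin 2) → Fin n → ℝ),
          (∀ ω, 0 ≤ P' ω) ∧ (∑ ω, P' ω) = 1 ∧
          CfPrefixDep Lc' Ac' ∧ CfConsistent L' A' Y' Lc' Ac' Yc' ∧
          B14 P' Lc' Ac' Yc' ∧ ¬ B13 P' Lc' Ac' Yc') :=
  have ⟨implication, counterexample⟩ := B13_strictly_stronger_than_B14_general P Lc Ac Yc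
  ⟨implication, 2, 1, 2, le_rfl, counterexample 2 le_rfl⟩
end
end
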